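/- Kummer's second transformation: let c ∈ ℂ be such that neither c nor 2c − 1 is a nonpositive integer, and let z ∈ ℂ ∖ ]−∞,0] with √z the principal square root. Then ₀F₁(c; z) = e^{−2√z} · ₁F₁(c − 1/2; 2c − 1; 4√z), where ₀F₁(c; z) := Γ(c)·₀𝐅₁(c; z) and ₁F₁(a; c; z) := Γ(c)·₁𝐅₁(a; c; z). -/

import Mathlib

open Complex

/-- Olver-normalized hypergeometric function `₀𝐅₁(c; w) = ∑ wⁿ/(n! Γ(c+n))`. -/
noncomputable def zeroF1reg (c w : ℂ) : ℂ :=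
  ∑' n : ℕ, w ^ n / ((n.factorial : ℂ) * Complex.Gamma (c + n))

/-- Olver-normalized confluent hypergeometric function
`₁𝐅₁(a; c; w) = ∑ (a)ₙ wⁿ/(n! Γ(c+n))`. -/
noncomputable def oneF1reg (a c w : ℂ) : ℂ :=
  ∑' n : ℕ, (ascPochhammer ℂ n).eval a * w ^ n / ((n.factorial : ℂ) * Complex.Gamma (c + n))

noncomputable def kf (a : ℂ) (n : ℕ) : ℂ :=
  Complex.Gamma (2 * a) * ((ascPochhammer ℂ n).eval a * 4 ^ n /
    ((n.factorial : ℂ) * Complex.Gamma (2 * a + n)))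

lemma kf_ne (a : ℂ) (h : ∀ n : ℕ, 2 * a ≠ -(n : ℂ)) (n : ℕ) : 2 * a + n ≠ 0 := by
  intro h1; exact h n (eq_neg_of_add_eq_zero_left h1)

lemma kf_ne' (a : ℂ) (h : ∀ n : ℕ, 2 * a ≠ -(n : ℂ)) (n : ℕ) : a + n ≠ 0 := by
  intro h1; apply h (2 * n); push_cast; linear_combination 2 * h1

lemma kf_zero (a : ℂ) (h : ∀ n : ℕ, 2 * a ≠ -(n : ℂ)) : kf a 0 = 1 := by
  have := Complex.Gamma_ne_zero h
  simp [kf, this]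

lemma kf_succ (a : ℂ) (h : ∀ n : ℕ, 2 * a ≠ -(n : ℂ)) (n : ℕ) :
    ((n : ℂ) + 1) * (2 * a + n) * kf a (n + 1) = 4 * (a + n) * kf a n := by
  have h1 := kf_ne a h n
  have hg : Complex.Gamma (2 * a + n) ≠ 0 := by
    apply Complex.Gamma_ne_zero
    intro m hm
    apply kf_ne a h (n + m)
    push_cast
    linear_combination hm
  have h3 : ((n : ℂ) + 1) ≠ 0 := Nat.cast_add_one_ne_zero n
  have h4 : (n.factorial : ℂ) ≠ 0 := Nat.cast_ne_zero.2 n.factorial_ne_zero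
  have e : Complex.Gamma (2 * a + ((n + 1 : ℕ) : ℂ)) = (2 * a + n) * Complex.Gamma (2 * a + n) := by
    rw [← Complex.Gamma_add_one _ h1]; push_cast; ring_nf
  unfold kf
  rw [e, ascPochhammer_succ_eval, Nat.factorial_succ]
  push_cast
  field_simp
  ring

lemma kf_nonzero (a : ℂ) (h : ∀ n : ℕ, 2 * a ≠ -(n : ℂ)) (n : ℕ) : kf a n ≠ 0 := by
  induction n with
  | zero => rw [kf_zero a h]; exact one_ne_zero
  | succ n ih =>
    intro h0
    have := kf_succ a h n
    rw [h0, mul_zero] at this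
    exact mul_ne_zero (mul_ne_zero (by norm_num) (kf_ne' a h n)) ih this.symm

lemma kf_summable (a w : ℂ) (hw : w ≠ 0) (h : ∀ n : ℕ, 2 * a ≠ -(n : ℂ)) :
    Summable (fun n => ‖kf a n * w ^ n‖) := by
  apply summable_of_ratio_test_tendsto_lt_one (l := 0) one_pos
  · filter_upwards with n
    exact norm_ne_zero_iff.2 (mul_ne_zero (kf_nonzero a h n) (pow_ne_zero _ hw))
  · have e : ∀ n : ℕ, ‖‖kf a (n + 1) * w ^ (n + 1)‖‖ / ‖‖kf a n * w ^ n‖‖ =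
        ‖4 * w * (((a + 1 * n) / (2 * a + 1 * n)) * (1 / ((n : ℂ) + 1)))‖ := by
      intro n
      rw [norm_norm, norm_norm, ← norm_div]
      congr 1
      have h1 := kf_ne a h n
      have h3 : ((n : ℂ) + 1) ≠ 0 := Nat.cast_add_one_ne_zero n
      have h5 := kf_nonzero a h n
      have := kf_succ a h n
      have h6 : kf a (n + 1) = 4 * (a + n) * kf a n / (((n : ℂ) + 1) * (2 * a + n)) := by
        rw [eq_div_iff (mul_ne_zero h3 h1)]; linear_combination this
      rw [one_mul, h6, pow_succ]
      field_simp
    simp_rw [e]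
    have t1 := tendsto_add_mul_div_add_mul_atTop_nhds (𝕜 := ℂ) a (2 * a) 1 (d := 1) one_ne_zero
    have t2 := tendsto_one_div_add_atTop_nhds_zero_nat (𝕜 := ℂ)
    simpa using ((t1.mul t2).const_mul (4 * w)).norm

noncomputable def kE : PowerSeries ℂ := PowerSeries.mk fun n => (-2 : ℂ) ^ n / (n.factorial : ℂ)

lemma kE_deriv : PowerSeries.derivative ℂ kE = -2 * kE := by
  have : (-2 * kE : PowerSeries ℂ) = PowerSeries.C (-2 : ℂ) * kE := by
    rw [map_neg, map_ofNat (PowerSeries.C (R := ℂ)) 2]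
  rw [this]
  ext n
  have h3 : ((n : ℂ) + 1) ≠ 0 := Nat.cast_add_one_ne_zero n
  have h4 : (n.factorial : ℂ) ≠ 0 := Nat.cast_ne_zero.2 n.factorial_ne_zero
  rw [PowerSeries.coeff_derivative, PowerSeries.coeff_C_mul]
  simp only [kE, PowerSeries.coeff_mk, Nat.factorial_succ]
  push_cast
  field_simp
  ring

noncomputable def kF (a : ℂ) : PowerSeries ℂ := PowerSeries.mk (kf a)

open PowerSeries in
lemma kF_ode (a : ℂ) (h : ∀ n : ℕ, 2 * a ≠ -(n : ℂ)) :
    X * derivative ℂ (derivative ℂ (kF a)) + C (2 * a) * derivative ℂ (kF a)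
      = C (4 * a) * kF a + C 4 * (X * derivative ℂ (kF a)) := by
  ext n
  cases n with
  | zero =>
    have := kf_succ a h 0
    simp only [map_add, coeff_C_mul, coeff_zero_X_mul, coeff_derivative, kF, coeff_mk]
    push_cast at this ⊢
    linear_combination this
  | succ n =>
    have := kf_succ a h (n + 1)
    simp only [map_add, coeff_C_mul, coeff_succ_X_mul, coeff_derivative, kF, coeff_mk]
    push_cast at this ⊢
    linear_combination this

open PowerSeries in
lemma kG_ode (a : ℂ) (h : ∀ n : ℕ, 2 * a ≠ -(n : ℂ)) :
    X * derivative ℂ (derivative ℂ (kE * kF a)) + C (2 * a) * derivative ℂ (kE * kF a)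
      = C 4 * (X * (kE * kF a)) := by
  have h0 := kF_ode a h
  have e1 : derivative ℂ (kE * kF a) = kE * (derivative ℂ (kF a) - 2 * kF a) := by
    rw [Derivation.leibniz, kE_deriv]; simp only [smul_eq_mul]; ring
  have e2 : derivative ℂ (kE * (derivative ℂ (kF a) - 2 * kF a)) =
      kE * (derivative ℂ (derivative ℂ (kF a)) - 4 * derivative ℂ (kF a) + 4 * kF a) := by
    have : (2 * kF a) = (2 : ℂ) • kF a := by rw [smul_eq_C_mul, map_ofNat (C (R := ℂ)) 2]
    rw [Derivation.leibniz, kE_deriv, map_sub, this, Derivation.map_smul, smul_eq_C_mul,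
      smul_eq_C_mul]
    simp only [smul_eq_mul, map_ofNat]; ring
  rw [e1, e2]
  simp only [map_mul, map_ofNat] at h0 ⊢
  linear_combination kE * h0

open PowerSeries in
lemma kG_rec (a : ℂ) (h : ∀ n : ℕ, 2 * a ≠ -(n : ℂ)) (n : ℕ) :
    ((n : ℂ) + 2) * (2 * a + (n + 1)) * coeff (n + 2) (kE * kF a) = 4 * coeff n (kE * kF a) := by
  have := congrArg (coeff (n + 1)) (kG_ode a h)
  simp only [map_add, coeff_C_mul, coeff_succ_X_mul, coeff_derivative] at this
  push_cast at this
  linear_combination this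

open PowerSeries in
lemma kG_odd (a : ℂ) (h : ∀ n : ℕ, 2 * a ≠ -(n : ℂ)) (m : ℕ) :
    coeff (2 * m + 1) (kE * kF a) = 0 := by
  induction m with
  | zero =>
    have := congrArg (coeff 0) (kG_ode a h)
    simp only [map_add, coeff_C_mul, coeff_zero_X_mul, coeff_derivative] at this
    have h0 := kf_ne a h 0
    simp only [Nat.cast_zero, add_zero, zero_add, mul_one, mul_zero] at this h0 ⊢
    exact (mul_eq_zero.1 this).resolve_left h0
  | succ m ih =>
    have := kG_rec a h (2 * m + 1)
    rw [ih, mul_zero] at this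
    have h1 := kf_ne a h (2 * m + 1 + 1)
    have h2 : (((2 * m + 1 : ℕ) : ℂ) + 2) ≠ 0 := by
      exact_mod_cast Nat.succ_ne_zero (2 * m + 1 + 1)
    push_cast at this h1 h2
    exact (mul_eq_zero.1 this).resolve_left (mul_ne_zero h2 h1)

open PowerSeries in
lemma kG_even (a c : ℂ) (hac : 2 * a = 2 * c - 1) (h : ∀ n : ℕ, 2 * a ≠ -(n : ℂ))
    (hc : ∀ n : ℕ, c ≠ -(n : ℂ)) (m : ℕ) :
    coeff (2 * m) (kE * kF a) =
      Complex.Gamma c * (1 / ((m.factorial : ℂ) * Complex.Gamma (c + m))) := by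
  induction m with
  | zero =>
    have := Complex.Gamma_ne_zero hc
    simp [kE, kF, kf_zero a h, this]
  | succ m ih =>
    have := kG_rec a h (2 * m)
    rw [ih] at this
    have hcm : c + m ≠ 0 := fun h1 => hc m (eq_neg_of_add_eq_zero_left h1)
    have hg : Complex.Gamma (c + m) ≠ 0 := by
      apply Complex.Gamma_ne_zero
      intro k hk
      apply hc (m + k)
      push_cast
      linear_combination hk
    have e : Complex.Gamma (c + ((m + 1 : ℕ) : ℂ)) = (c + m) * Complex.Gamma (c + m) := by
      rw [← Complex.Gamma_add_one _ hcm]; push_cast; ring_nf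
    have h3 : ((m : ℂ) + 1) ≠ 0 := Nat.cast_add_one_ne_zero m
    have h4 : (m.factorial : ℂ) ≠ 0 := Nat.cast_ne_zero.2 m.factorial_ne_zero
    rw [e, Nat.factorial_succ, show 2 * (m + 1) = 2 * m + 2 by ring]
    push_cast at this ⊢
    rw [hac] at this
    field_simp at this ⊢
    have h4' : (4 : ℂ) ≠ 0 := by norm_num
    apply mul_left_cancel₀ h4'
    linear_combination this

/-- Kummer's second transformation:
`₀F₁(c; z) = e^{-2√z} ₁F₁(c - 1/2; 2c - 1; 4√z)` whenever neither `c` nor `2c - 1` is a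
nonpositive integer and `z ∉ ]-∞,0]`, with `√z` the principal square root, where
`₀F₁(c; z) = Γ(c)·₀𝐅₁(c; z)` and `₁F₁(a; c; z) = Γ(c)·₁𝐅₁(a; c; z)`. -/
theorem kummer_second_transformation (c z : ℂ)
    (hc : ∀ n : ℕ, c ≠ -(n : ℂ)) (hc' : ∀ n : ℕ, 2 * c - 1 ≠ -(n : ℂ))
    (hz : ¬(z.im = 0 ∧ z.re ≤ 0)) :
    Complex.Gamma c * zeroF1reg c z =
      Complex.exp (-2 * z ^ ((1 : ℂ) / 2)) *
        (Complex.Gamma (2 * c - 1) *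
          oneF1reg (c - 1 / 2) (2 * c - 1) (4 * z ^ ((1 : ℂ) / 2))) := by
  have hz0 : z ≠ 0 := by rintro rfl; simp at hz
  have hw2 : (z ^ ((1 : ℂ) / 2)) ^ 2 = z := by
    have := Complex.cpow_nat_inv_pow z (n := 2) two_ne_zero
    simpa using this
  generalize z ^ ((1 : ℂ) / 2) = w at hw2 ⊢
  have hw : w ≠ 0 := by rintro rfl; simp at hw2; exact hz0 hw2.symm
  obtain ⟨a, ha⟩ : ∃ a, a = c - 1 / 2 := ⟨_, rfl⟩
  have hac : 2 * a = 2 * c - 1 := by rw [ha]; ring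
  rw [← ha, ← hac]
  rw [← hac] at hc'
  have e1 : Complex.Gamma (2 * a) * oneF1reg a (2 * a) (4 * w) = ∑' n, kf a n * w ^ n := by
    rw [oneF1reg, ← tsum_mul_left]
    congr 1; ext n
    rw [kf, mul_pow]; ring
  have e2 : Complex.exp (-2 * w) = ∑' n : ℕ, ((-2 : ℂ) ^ n / (n.factorial : ℂ)) * w ^ n := by
    rw [Complex.exp_eq_exp_ℂ, NormedSpace.exp_eq_tsum_div]
    refine tsum_congr fun n => ?_
    rw [mul_pow]; ring
  have s2 : Summable (fun n : ℕ => ‖((-2 : ℂ) ^ n / (n.factorial : ℂ)) * w ^ n‖) := by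
    have := (NormedSpace.norm_expSeries_div_summable (𝔸 := ℂ) (-2 * w))
    refine this.congr fun n => ?_
    rw [mul_pow]; congr 1; ring
  rw [e1, e2, tsum_mul_tsum_eq_tsum_sum_antidiagonal_of_summable_norm s2 (kf_summable a w hw hc')]
  have e3 : ∀ n : ℕ, (∑ kl ∈ Finset.HasAntidiagonal.antidiagonal n,
      ((-2 : ℂ) ^ kl.1 / (kl.1.factorial : ℂ)) * w ^ kl.1 * (kf a kl.2 * w ^ kl.2))
      = PowerSeries.coeff n (kE * kF a) * w ^ n := by
    intro n
    rw [PowerSeries.coeff_mul, Finset.sum_mul]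
    refine Finset.sum_congr rfl fun kl hkl => ?_
    rw [← Finset.HasAntidiagonal.mem_antidiagonal.1 hkl, pow_add]
    simp only [kE, kF, PowerSeries.coeff_mk]
    ring
  simp_rw [e3]
  have inj : Function.Injective (fun m : ℕ => 2 * m) := fun x y h => by simpa using h
  rw [← inj.tsum_eq, zeroF1reg, ← tsum_mul_left]
  · congr 1; ext m
    rw [kG_even a c hac hc' hc, pow_mul, hw2]; ring
  · intro n hn
    rcases Nat.even_or_odd' n with ⟨m, rfl | rfl⟩
    · exact ⟨m, rfl⟩
    · exact absurd (by simp only [kG_odd a hc', zero_mul]) hn
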